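/- For every ϑ > 0 and for almost every α ∈ ℝ^d (with respect to Lebesgue measure), the series ∑_{m∈ℤ^d\{0}} |m|^{−dϑ} log^{−ϑ}(1+|m|) ‖m·α‖^{−ϑ} diverges, i.e. equals +∞. -/

import Mathlib

open MeasureTheory Filter Finset
open scoped Real ENNReal Topology BigOperators

noncomputable section

/-- Distance from a real number to the nearest integer. -/
def dnint (t : ℝ) : ℝ := |t - (round t : ℝ)|

/-- Euclidean norm of an integer vector. -/
def znorm {d : ℕ} (m : Fin d → ℤ) : ℝ := Real.sqrt (∑ i, ((m i : ℝ)) ^ 2)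

/-- A function on `ℝ^d` which is `ℤ^d`-periodic (i.e. a function on the torus `𝕋^d`). -/
def ZdPeriodic {d : ℕ} (f : (Fin d → ℝ) → ℂ) : Prop :=
  ∀ (x : Fin d → ℝ) (k : Fin d → ℤ), f (x + fun i => (k i : ℝ)) = f x

/-- The unit cube, a fundamental domain of the torus `𝕋^d`. -/
def cube (d : ℕ) : Set (Fin d → ℝ) := Set.Icc 0 1

/-- Fourier coefficient of a (periodic) function. -/
def fcoef {d : ℕ} (f : (Fin d → ℝ) → ℂ) (m : Fin d → ℤ) : ℂ :=
  ∫ x in cube d,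
    f x * Complex.exp (-(2 * Real.pi * Complex.I * ((∑ i, (m i : ℝ) * x i : ℝ) : ℂ)))

/-- Membership in the Sobolev space `W^{δ,2}(𝕋^d)`. -/
def MemSobolev {d : ℕ} (δ : ℝ) (f : (Fin d → ℝ) → ℂ) : Prop :=
  Summable (fun m : Fin d → ℤ => (1 + znorm m ^ 2) ^ δ * ‖fcoef f m‖ ^ 2)

/-- The Sobolev norm `‖f‖_{δ,2}`. -/
def sobNorm {d : ℕ} (δ : ℝ) (f : (Fin d → ℝ) → ℂ) : ℝ :=
  Real.sqrt (∑' m : Fin d → ℤ, (1 + znorm m ^ 2) ^ δ * ‖fcoef f m‖ ^ 2)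

/-- The kernel `∑_{n ∈ ℤ} Φ(N,n) e^{2πint}` of the summation method. -/
def kern (Φ : ℕ → ℤ → ℂ) (N : ℕ) (t : ℝ) : ℂ :=
  ∑' n : ℤ, Φ N n * Complex.exp (2 * Real.pi * Complex.I * (n : ℂ) * (t : ℂ))

/-- The weighted discrepancy `D_N^{Φ,α} f(x)`. -/
def disc {d : ℕ} (Φ : ℕ → ℤ → ℂ) (α : Fin d → ℝ) (f : (Fin d → ℝ) → ℂ)
    (N : ℕ) (x : Fin d → ℝ) : ℂ :=
  (∑' n : ℤ, Φ N n * f (x + n • α)) - ∫ y in cube d, f y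

/-- `α ∈ ℝ^d` is an irrational vector: `1, α₁, …, α_d` are linearly independent over `ℚ`. -/
def IrrationalVec {d : ℕ} (α : Fin d → ℝ) : Prop :=
  ∀ (m : Fin d → ℤ) (k : ℤ), (∑ i, (m i : ℝ) * α i) + (k : ℝ) = 0 → m = 0 ∧ k = 0

/-!
Up to a constant, the summand at `m` is at least `1` once `‖m·α‖ ≤ 1 / (|m| ^ d log (1 + |m|))`, so
it suffices that for almost every `α` this happens for infinitely many `m`. This condition depends
only on `α` modulo `ℤ ^ d`, and the measures of the corresponding events have a divergent sum.

The second moment method of Kochen and Stone then asks for control of pairwise intersections. For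
`d ≥ 2` one restricts to a large family of pairwise non-proportional `m`: two such characters
together push the Haar measure of the torus to that of the two-dimensional torus, so the events are
pairwise independent. For `d = 1` independence fails; instead, the intervals around reduced
fractions satisfy the overlap estimate of Duffin and Schaeffer, which gives a set of positive
measure, and Gallagher's zero-one law upgrades it to full measure.
-/

section HitCount

variable {Ω ι : Type*}

/-- The number of indices `i ∈ S` with `x ∈ E i`, as a real-valued function of `x` that can be
integrated. -/
def hitCount (E : ι → Set Ω) (S : Finset ι) (x : Ω) : ℝ := ∑ i ∈ S, (E i).indicator 1 x

variable {E : ι → Set Ω}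

lemma infinite_of_forall_exists_lt_hitCount {S : ℕ → Finset ι} {x : Ω}
    (h : ∀ K : ℕ, ∃ N, (K : ℝ) < hitCount E (S N) x) :
    {i ∈ ⋃ N, (S N : Set ι) | x ∈ E i}.Infinite := by
  classical
  intro hfin
  obtain ⟨N, hN⟩ := h hfin.toFinset.card
  have hcount : hitCount E (S N) x = #{i ∈ S N | x ∈ E i} := by
    simp [hitCount, Set.indicator_apply]
  have hsub : {i ∈ S N | x ∈ E i} ⊆ hfin.toFinset := by
    intro i hi
    rw [mem_filter] at hi
    exact hfin.mem_toFinset.2 ⟨Set.mem_iUnion.2 ⟨N, hi.1⟩, hi.2⟩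
  rw [hcount, Nat.cast_lt] at hN
  exact hN.not_ge (card_le_card hsub)

variable [MeasurableSpace Ω] {μ : Measure Ω}

lemma measurable_hitCount (hE : ∀ i, MeasurableSet (E i)) (S : Finset ι) :
    Measurable (hitCount E S) :=
  Finset.measurable_sum _ fun i _ => measurable_one.indicator (hE i)

variable [IsFiniteMeasure μ]

lemma memLp_hitCount (hE : ∀ i, MeasurableSet (E i)) (S : Finset ι) :
    MemLp (hitCount E S) 2 μ :=
  memLp_finsetSum _ fun i _ => (memLp_const 1).indicator (hE i)

lemma integral_hitCount (hE : ∀ i, MeasurableSet (E i)) (S : Finset ι) :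
    ∫ x, hitCount E S x ∂μ = ∑ i ∈ S, μ.real (E i) := by
  simp only [hitCount]
  rw [integral_finsetSum _ fun i _ => (integrable_const 1).indicator (hE i)]
  exact sum_congr rfl fun i _ => integral_indicator_one (hE i)

lemma integral_hitCount_sq (hE : ∀ i, MeasurableSet (E i)) (S : Finset ι) :
    ∫ x, hitCount E S x ^ 2 ∂μ = ∑ i ∈ S, ∑ j ∈ S, μ.real (E i ∩ E j) := by
  have hpair (i j : ι) : MeasurableSet (E i ∩ E j) := (hE i).inter (hE j)
  have hint (i j : ι) : Integrable ((E i ∩ E j).indicator (1 : Ω → ℝ)) μ :=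
    (integrable_const 1).indicator (hpair i j)
  have hsq (x : Ω) :
      hitCount E S x ^ 2 = ∑ i ∈ S, ∑ j ∈ S, (E i ∩ E j).indicator (1 : Ω → ℝ) x := by
    simp only [hitCount, sq, sum_mul_sum, Set.inter_indicator_one, Pi.mul_apply]
  simp_rw [hsq]
  rw [integral_finsetSum _ fun i _ => integrable_finsetSum _ fun j _ => hint i j]
  refine sum_congr rfl fun i _ => ?_
  rw [integral_finsetSum _ fun j _ => hint i j]
  exact sum_congr rfl fun j _ => integral_indicator_one (hpair i j)

end HitCount

section SecondMoment

variable {Ω : Type*} [MeasurableSpace Ω] {μ : Measure Ω}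

lemma sq_integral_le_measureReal_univ_mul_integral_sq [IsFiniteMeasure μ] {X : Ω → ℝ}
    (hX : MemLp X 2 μ) : (∫ x, X x ∂μ) ^ 2 ≤ μ.real Set.univ * ∫ x, X x ^ 2 ∂μ := by
  have hX1 : Integrable X μ := hX.integrable one_le_two
  have expand (t : ℝ) : ∫ x, (t - X x) ^ 2 ∂μ =
      μ.real Set.univ * (t * t) + (-2 * ∫ x, X x ∂μ) * t + ∫ x, X x ^ 2 ∂μ := by
    have hlin : Integrable (fun x => t * t - 2 * t * X x) μ :=
      (integrable_const _).sub (hX1.const_mul _)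
    calc ∫ x, (t - X x) ^ 2 ∂μ = ∫ x, (t * t - 2 * t * X x + X x ^ 2) ∂μ := by
          congr with x; ring
      _ = μ.real Set.univ * (t * t) - 2 * t * ∫ x, X x ∂μ + ∫ x, X x ^ 2 ∂μ := by
          rw [integral_add hlin hX.integrable_sq,
            integral_sub (integrable_const _) (hX1.const_mul _), integral_const, smul_eq_mul,
            integral_const_mul]
      _ = _ := by ring
  have hdiscrim := discrim_le_zero fun t => expand t ▸ integral_nonneg fun x => sq_nonneg (t - X x)
  rw [discrim] at hdiscrim
  linarith

variable [IsProbabilityMeasure μ]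

lemma paley_zygmund {X : Ω → ℝ} (hXm : Measurable X) (hX : MemLp X 2 μ)
    {K : ℝ} (hK : 0 ≤ K) (hKX : K ≤ ∫ x, X x ∂μ) :
    (∫ x, X x ∂μ - K) ^ 2 ≤ μ.real {x | K < X x} * ∫ x, X x ^ 2 ∂μ := by
  set P := {x | K < X x}
  have hP : MeasurableSet P := measurableSet_lt measurable_const hXm
  have hX1 : Integrable X μ := hX.integrable one_le_two
  have hmean : ∫ x, X x ∂μ - K ≤ ∫ x in P, X x ∂μ := by
    calc ∫ x, X x ∂μ - K = ∫ x, (X x - K) ∂μ := by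
          rw [integral_sub hX1 (integrable_const K)]; simp
      _ ≤ ∫ x, P.indicator X x ∂μ := by
          refine integral_mono (hX1.sub (integrable_const K)) (hX1.indicator hP) fun x => ?_
          by_cases hx : x ∈ P
          · simpa [hx] using hK
          · simpa [hx] using not_lt.mp hx
      _ = ∫ x in P, X x ∂μ := integral_indicator hP
  have hsq : ∫ x in P, X x ^ 2 ∂μ ≤ ∫ x, X x ^ 2 ∂μ :=
    setIntegral_le_integral hX.integrable_sq (.of_forall fun x => sq_nonneg _)
  calc (∫ x, X x ∂μ - K) ^ 2 ≤ (∫ x in P, X x ∂μ) ^ 2 :=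
        pow_le_pow_left₀ (sub_nonneg.2 hKX) hmean 2
    _ ≤ μ.real P * ∫ x in P, X x ^ 2 ∂μ := by
        simpa using sq_integral_le_measureReal_univ_mul_integral_sq (hX.restrict P)
    _ ≤ μ.real P * ∫ x, X x ^ 2 ∂μ := by gcongr

variable {ι : Type*} {E : ι → Set Ω}

lemma sq_sum_measureReal_sub_le [DecidableEq ι] (hE : ∀ i, MeasurableSet (E i)) (S : Finset ι)
    {K : ℝ} (hK : 0 ≤ K) (hKE : K ≤ ∑ i ∈ S, μ.real (E i)) :
    (∑ i ∈ S, μ.real (E i) - K) ^ 2 ≤ μ.real {x | K < hitCount E S x} *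
      (∑ i ∈ S, μ.real (E i) + ∑ i ∈ S, ∑ j ∈ S.erase i, μ.real (E i ∩ E j)) := by
  have hdiag : ∑ i ∈ S, ∑ j ∈ S, μ.real (E i ∩ E j) =
      ∑ i ∈ S, μ.real (E i) + ∑ i ∈ S, ∑ j ∈ S.erase i, μ.real (E i ∩ E j) := by
    rw [← sum_add_distrib]
    exact sum_congr rfl fun i hi => by rw [← add_sum_erase _ _ hi, Set.inter_self]
  rw [← hdiag, ← integral_hitCount_sq hE]
  rw [← integral_hitCount hE] at hKE ⊢
  exact paley_zygmund (measurable_hitCount hE S) (memLp_hitCount hE S) hK hKE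

variable {S : ℕ → Finset ι} {C : ℝ}

lemma one_le_mul_measureReal_iUnion_lt_hitCount [DecidableEq ι] (hE : ∀ i, MeasurableSet (E i))
    (hdiv : Tendsto (fun N => ∑ i ∈ S N, μ.real (E i)) atTop atTop)
    (hpair : ∀ N, ∑ i ∈ S N, ∑ j ∈ (S N).erase i, μ.real (E i ∩ E j) ≤
      C * (∑ i ∈ S N, μ.real (E i)) ^ 2) (K : ℕ) :
    1 ≤ C * μ.real (⋃ N, {x | (K : ℝ) < hitCount E (S N) x}) := by
  set B := ⋃ N, {x | (K : ℝ) < hitCount E (S N) x}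
  set M : ℕ → ℝ := fun N => ∑ i ∈ S N, μ.real (E i)
  have hinv : Tendsto (fun N => (M N)⁻¹) atTop (𝓝 0) := tendsto_inv_atTop_zero.comp hdiv
  have hlhs : Tendsto (fun N => (1 - K * (M N)⁻¹) ^ 2) atTop (𝓝 1) := by
    simpa using ((hinv.const_mul (K : ℝ)).const_sub 1).pow 2
  have hrhs : Tendsto (fun N => ((M N)⁻¹ + C) * μ.real B) atTop (𝓝 (C * μ.real B)) := by
    simpa using (hinv.add_const C).mul_const (μ.real B)
  refine le_of_tendsto_of_tendsto hlhs hrhs ?_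
  filter_upwards [hdiv.eventually_ge_atTop (K : ℝ), hdiv.eventually_gt_atTop 0] with N hKM hpos
  have hM : M N ≠ 0 := ne_of_gt hpos
  have hmoment : (M N - K) ^ 2 ≤ μ.real B * (M N + C * M N ^ 2) := by
    refine (sq_sum_measureReal_sub_le hE (S N) K.cast_nonneg hKM).trans ?_
    gcongr
    · exact measure_ne_top _ _
    · exact Set.subset_iUnion_of_subset N subset_rfl
    · exact hpair N
  calc (1 - K * (M N)⁻¹) ^ 2 = (M N - K) ^ 2 / M N ^ 2 := by field_simp
    _ ≤ μ.real B * (M N + C * M N ^ 2) / M N ^ 2 := by gcongr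
    _ = ((M N)⁻¹ + C) * μ.real B := by field_simp

theorem kochen_stone [DecidableEq ι] (hE : ∀ i, MeasurableSet (E i))
    (hdiv : Tendsto (fun N => ∑ i ∈ S N, μ.real (E i)) atTop atTop)
    (hpair : ∀ N, ∑ i ∈ S N, ∑ j ∈ (S N).erase i, μ.real (E i ∩ E j) ≤
      C * (∑ i ∈ S N, μ.real (E i)) ^ 2) :
    ∃ G : Set Ω, MeasurableSet G ∧
      (∀ x ∈ G, {i ∈ ⋃ N, (S N : Set ι) | x ∈ E i}.Infinite) ∧ 1 ≤ C * μ.real G := by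
  set B : ℕ → Set Ω := fun K => ⋃ N, {x | (K : ℝ) < hitCount E (S N) x}
  have hBmeas (K : ℕ) : MeasurableSet (B K) :=
    .iUnion fun N => measurableSet_lt measurable_const (measurable_hitCount hE _)
  have hBanti : Antitone B := fun K L hKL => Set.iUnion_mono fun N x hx =>
    (Nat.cast_le.2 hKL).trans_lt (Set.mem_ofPred.1 hx)
  refine ⟨⋂ K, B K, .iInter hBmeas, fun x hx => ?_, ?_⟩
  · exact infinite_of_forall_exists_lt_hitCount fun K => Set.mem_iUnion.1 (Set.mem_iInter.1 hx K)
  · have hlim : Tendsto (fun K => μ.real (B K)) atTop (𝓝 (μ.real (⋂ K, B K))) :=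
      (ENNReal.tendsto_toReal (measure_ne_top _ _)).comp <|
        tendsto_measure_iInter_atTop (fun K => (hBmeas K).nullMeasurableSet) hBanti
          ⟨0, measure_ne_top _ _⟩
    exact ge_of_tendsto' (hlim.const_mul C) fun K =>
      one_le_mul_measureReal_iUnion_lt_hitCount hE hdiv hpair K

theorem ae_infinite_of_pairwise_measureReal_inter_eq_mul (hE : ∀ i, MeasurableSet (E i))
    (hdiv : Tendsto (fun N => ∑ i ∈ S N, μ.real (E i)) atTop atTop)
    (hindep : ∀ N, (S N : Set ι).Pairwise fun i j =>
      μ.real (E i ∩ E j) = μ.real (E i) * μ.real (E j)) :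
    ∀ᵐ x ∂μ, {i ∈ ⋃ N, (S N : Set ι) | x ∈ E i}.Infinite := by
  classical
  have hpair (N : ℕ) : ∑ i ∈ S N, ∑ j ∈ (S N).erase i, μ.real (E i ∩ E j) ≤
      1 * (∑ i ∈ S N, μ.real (E i)) ^ 2 := by
    rw [one_mul, sq, sum_mul_sum]
    refine sum_le_sum fun i hi => ?_
    rw [sum_congr rfl fun j hj => hindep N hi (mem_of_mem_erase hj) (ne_of_mem_erase hj).symm]
    exact sum_le_sum_of_subset_of_nonneg (erase_subset _ _) fun _ _ _ => by positivity
  obtain ⟨G, hGmeas, hG, hGone⟩ := kochen_stone hE hdiv hpair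
  rw [one_mul] at hGone
  have hGae : G ∈ ae μ := by
    rw [mem_ae_iff_prob_eq_one hGmeas, ← ofReal_measureReal (μ := μ) (s := G),
      le_antisymm measureReal_le_one hGone, ENNReal.ofReal_one]
  exact Filter.mem_of_superset hGae hG

end SecondMoment

section TotientSums

-- Write `n = ∑ φ(j)` over the factorizations `n = j * k` and sum over `k` first.
lemma sum_mul_le_two_mul_sum_totient_mul {w : ℕ → ℝ} (hw0 : ∀ n, 0 ≤ w n)
    (hw : ∀ j k, 0 < j → 0 < k → w (j * k) ≤ w j * ((k : ℝ) ^ 2)⁻¹) (N : ℕ) :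
    ∑ n ∈ range N, n * w n ≤ 2 * ∑ n ∈ range N, n.totient * w n := by
  rcases N with _ | N
  · simp
  set P := Ioc 0 N ×ˢ Ioc 0 N
  set F : ℕ × ℕ → ℝ := fun p => p.1.totient * (w p.1 * ((p.2 : ℝ) ^ 2)⁻¹)
  have hF (p : ℕ × ℕ) : 0 ≤ F p := by have := hw0 p.1; positivity
  have hfiber (n : ℕ) (hn : n ∈ range (N + 1)) : n * w n ≤ ∑ p ∈ P with p.1 * p.2 = n, F p := by
    rcases eq_or_ne n 0 with rfl | hn0
    · simpa using sum_nonneg fun p _ => hF p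
    rw [← Nat.divisorsAntidiagonal_eq_prod_filter_of_le hn0 (mem_range_succ_iff.1 hn)]
    have hsum : (n : ℝ) = ∑ p ∈ n.divisorsAntidiagonal, (p.1.totient : ℝ) := by
      rw [Nat.sum_divisorsAntidiagonal (fun j _ => (j.totient : ℝ))]
      exact_mod_cast n.sum_totient.symm
    conv_lhs => rw [hsum, sum_mul]
    refine sum_le_sum fun p hp => mul_le_mul_of_nonneg_left ?_ (Nat.cast_nonneg _)
    obtain ⟨rfl, -⟩ := Nat.mem_divisorsAntidiagonal.1 hp
    exact hw _ _ (Nat.pos_of_ne_zero (left_ne_zero_of_mul hn0))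
      (Nat.pos_of_ne_zero (right_ne_zero_of_mul hn0))
  have hinvsq : ∑ k ∈ Ioc 0 N, ((k : ℝ) ^ 2)⁻¹ ≤ 2 := by
    have hIoc : Ioc 0 N = Ioo 0 (N + 1) := by ext; simp
    simpa [hIoc] using sum_Ioo_inv_sq_le (α := ℝ) 0 (N + 1)
  have hsub : ∑ n ∈ Ioc 0 N, n.totient * w n ≤ ∑ n ∈ range (N + 1), n.totient * w n :=
    sum_le_sum_of_subset_of_nonneg (fun n hn => mem_range_succ_iff.2 (mem_Ioc.1 hn).2)
      fun n _ _ => mul_nonneg (Nat.cast_nonneg _) (hw0 n)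
  calc ∑ n ∈ range (N + 1), n * w n
      ≤ ∑ n ∈ range (N + 1), ∑ p ∈ P with p.1 * p.2 = n, F p := sum_le_sum hfiber
    _ ≤ ∑ p ∈ P, F p :=
        sum_fiberwise_le_sum_of_sum_fiber_nonneg fun n _ => sum_nonneg fun p _ => hF p
    _ = (∑ k ∈ Ioc 0 N, ((k : ℝ) ^ 2)⁻¹) * ∑ n ∈ Ioc 0 N, n.totient * w n := by
        rw [mul_comm, sum_mul_sum, ← sum_product']
        exact sum_congr rfl fun p _ => (mul_assoc _ _ _).symm
    _ ≤ 2 * ∑ n ∈ range (N + 1), n.totient * w n := by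
        gcongr
        exact sum_nonneg fun n _ => mul_nonneg (Nat.cast_nonneg _) (hw0 n)

/-- The approximation rate `1 / (x ^ d log (1 + x))` at the critical exponent of the
Khintchine-Groshev theorem for linear forms in `d` variables. It is `0` at `x = 0`. -/
def logRate (d : ℕ) (x : ℝ) : ℝ := (x ^ d * Real.log (1 + x))⁻¹

lemma logRate_natCast_nonneg (d n : ℕ) : 0 ≤ logRate d n := by
  have : 0 ≤ Real.log (1 + n) := Real.log_nonneg (by simp)
  unfold logRate
  positivity

lemma half_le_log_one_add {x : ℝ} (hx : 1 ≤ x) : 1 / 2 ≤ Real.log (1 + x) := by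
  have h2 : Real.log 2 ≤ Real.log (1 + x) := Real.log_le_log two_pos (by linarith)
  linarith [Real.log_two_gt_d9]

lemma logRate_natCast_le (d n : ℕ) : logRate d n ≤ 2 * ((n : ℝ) ^ d)⁻¹ := by
  rcases n.eq_zero_or_pos with rfl | hn
  · simp [logRate]
  have hn1 : (1 : ℝ) ≤ n := Nat.one_le_cast.2 hn
  have hlog : (Real.log (1 + n))⁻¹ ≤ 2 :=
    inv_le_of_inv_le₀ two_pos (by simpa using half_le_log_one_add hn1)
  rw [logRate, mul_inv, mul_comm]
  gcongr

lemma logRate_natCast_le_two (d n : ℕ) : logRate d n ≤ 2 := by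
  rcases n.eq_zero_or_pos with rfl | hn
  · simp [logRate]
  have hpow : ((n : ℝ) ^ d)⁻¹ ≤ 1 := inv_le_one_of_one_le₀ (one_le_pow₀ (Nat.one_le_cast.2 hn))
  linarith [logRate_natCast_le d n]

lemma logRate_mul_le (d : ℕ) {x y : ℝ} (hx : 0 < x) (hy : 1 ≤ y) :
    logRate d (x * y) ≤ logRate d x * (y ^ d)⁻¹ := by
  have hlogpos : 0 < Real.log (1 + x) := Real.log_pos (by linarith)
  have hlog : Real.log (1 + x) ≤ Real.log (1 + x * y) :=
    Real.log_le_log (by linarith) (by nlinarith)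
  rw [logRate, logRate, ← mul_inv]
  refine inv_anti₀ (by positivity) ?_
  calc x ^ d * Real.log (1 + x) * y ^ d = (x * y) ^ d * Real.log (1 + x) := by ring
    _ ≤ (x * y) ^ d * Real.log (1 + x * y) := by gcongr

lemma pow_mul_logRate_add (d : ℕ) {k : ℕ} {x : ℝ} (hx : x ≠ 0) :
    x ^ k * logRate (d + k) x = logRate d x := by
  simp only [logRate, mul_inv, pow_add]
  field_simp

lemma natCast_mul_logRate_two (n : ℕ) : n * logRate 2 n = logRate 1 n := by
  rcases eq_or_ne n 0 with rfl | hn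
  · simp [logRate]
  · simpa using pow_mul_logRate_add 1 (k := 1) (Nat.cast_ne_zero.2 hn)

lemma not_summable_logRate_one : ¬ Summable fun n : ℕ => logRate 1 n := by
  have hanti (m n : ℕ) (hm : 0 < m) (hmn : m ≤ n) : logRate 1 n ≤ logRate 1 m := by
    have hm' : (0 : ℝ) < m := Nat.cast_pos.2 hm
    have hlog : 0 < Real.log (1 + m) := Real.log_pos (by linarith)
    unfold logRate
    gcongr
  have hcondensed (k : ℕ) : (((k : ℝ) + 1))⁻¹ ≤ 2 ^ k * logRate 1 ((2 ^ k : ℕ) : ℝ) := by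
    have h1 : (1 : ℝ) ≤ 2 ^ k := one_le_pow₀ one_le_two
    have hpos : 0 < Real.log (1 + 2 ^ k) := Real.log_pos (by linarith)
    have hlog : Real.log (1 + 2 ^ k) ≤ k + 1 := by
      calc Real.log (1 + 2 ^ k) ≤ Real.log (2 ^ (k + 1)) :=
            Real.log_le_log (by positivity) (by rw [pow_succ]; linarith)
        _ = (k + 1) * Real.log 2 := by rw [Real.log_pow]; push_cast; ring
        _ ≤ k + 1 := mul_le_of_le_one_right (by positivity) (by linarith [Real.log_two_lt_d9])
    rw [logRate, Nat.cast_pow, Nat.cast_ofNat, pow_one, mul_inv,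
      mul_inv_cancel_left₀ (by positivity)]
    exact inv_anti₀ hpos hlog
  rw [← summable_condensed_iff_of_nonneg (logRate_natCast_nonneg 1) hanti]
  intro hsummable
  have hharmonic : Summable fun k : ℕ => ((k + 1 : ℕ) : ℝ)⁻¹ :=
    .of_nonneg_of_le (fun k => by positivity) (fun k => by simpa using hcondensed k) hsummable
  exact Real.not_summable_natCast_inv ((summable_nat_add_iff 1).1 hharmonic)

lemma sum_mul_logRate_two_le (N : ℕ) :
    ∑ n ∈ range N, n * logRate 2 n ≤ 2 * ∑ n ∈ range N, n.totient * logRate 2 n :=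
  sum_mul_le_two_mul_sum_totient_mul (logRate_natCast_nonneg 2)
    (fun j k hj hk => by
      simpa using logRate_mul_le 2 (Nat.cast_pos.2 hj) (Nat.one_le_cast.2 hk)) N

lemma not_summable_totient_mul_logRate_two :
    ¬ Summable fun n : ℕ => n.totient * logRate 2 n := by
  intro h
  refine not_summable_logRate_one <| summable_of_sum_range_le
    (c := 2 * ∑' n : ℕ, n.totient * logRate 2 n) (logRate_natCast_nonneg 1) fun N => ?_
  calc ∑ n ∈ range N, logRate 1 n = ∑ n ∈ range N, n * logRate 2 n := by
        simp_rw [natCast_mul_logRate_two]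
    _ ≤ 2 * ∑ n ∈ range N, n.totient * logRate 2 n := sum_mul_logRate_two_le N
    _ ≤ 2 * ∑' n : ℕ, n.totient * logRate 2 n := by
        gcongr
        exact h.sum_le_tsum _ fun n _ =>
          mul_nonneg (Nat.cast_nonneg _) (logRate_natCast_nonneg 2 n)

lemma tendsto_logRate_natCast {d : ℕ} (hd : d ≠ 0) :
    Tendsto (fun n : ℕ => logRate d n) atTop (𝓝 0) := by
  refine squeeze_zero (logRate_natCast_nonneg d) (logRate_natCast_le d) ?_
  have hpow : Tendsto (fun n : ℕ => (n : ℝ) ^ d) atTop atTop :=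
    (tendsto_pow_atTop hd).comp tendsto_natCast_atTop_atTop
  simpa using (tendsto_inv_atTop_zero.comp hpow).const_mul (2 : ℝ)

end TotientSums

section Circle

instance isProbabilityMeasure_unitAddCircle :
    IsProbabilityMeasure (volume : Measure UnitAddCircle) :=
  ⟨UnitAddCircle.measure_univ⟩

lemma measureReal_ball (y : UnitAddCircle) {a : ℝ} (ha : 0 ≤ a) (ha' : 2 * a ≤ 1) :
    volume.real (Metric.ball y a) = 2 * a := by
  rw [← measureReal_congr AddCircle.closedBall_ae_eq_ball, Measure.real,
    AddCircle.volume_closedBall, min_eq_right ha', ENNReal.toReal_ofReal (by positivity)]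

lemma card_le_of_forall_nsmul_eq_zero {n : ℕ} (hn : 0 < n) {T : Finset UnitAddCircle}
    (hT : ∀ y ∈ T, n • y = 0) : #T ≤ n := by
  classical
  have hsub : T ⊆ (range n).image fun m : ℕ => ((m / n * 1 : ℝ) : UnitAddCircle) := by
    intro y hy
    obtain ⟨m, hm, rfl⟩ := (AddCircle.nsmul_eq_zero_iff hn).1 (hT y hy)
    exact mem_image_of_mem _ (mem_range.2 hm)
  simpa using (card_le_card hsub).trans card_image_le

lemma exists_intCast_div_eq_of_nsmul_eq_zero {n : ℕ} (hn : 0 < n) {y : UnitAddCircle}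
    (hy : n • y = 0) : ∃ j : ℤ, ((j / n : ℝ) : UnitAddCircle) = y ∧ |(j : ℝ)| = n * ‖y‖ := by
  induction y using QuotientAddGroup.induction_on with | H x =>
  have hn' : (n : ℝ) ≠ 0 := Nat.cast_ne_zero.2 hn.ne'
  have hround : ((x - round x : ℝ) : UnitAddCircle) = (x : UnitAddCircle) := by
    rw [AddCircle.coe_sub, sub_eq_self, AddCircle.coe_eq_zero_iff]
    exact ⟨round x, by simp⟩
  have hzero : ((n • (x - round x) : ℝ) : UnitAddCircle) = 0 := by
    rw [AddCircle.coe_nsmul, hround]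
    exact hy
  obtain ⟨j, hj⟩ := (AddCircle.coe_eq_zero_iff 1).1 hzero
  simp only [zsmul_eq_mul, mul_one, nsmul_eq_mul] at hj
  refine ⟨j, ?_, ?_⟩
  · rw [hj, mul_div_cancel_left₀ _ hn']
    exact hround
  · rw [hj, abs_mul, Nat.abs_cast]
    exact congrArg _ (UnitAddCircle.norm_eq (x := x)).symm

lemma card_le_of_forall_norm_le {n : ℕ} (hn : 0 < n) {ε : ℝ} (hε : 0 ≤ ε)
    {T : Finset UnitAddCircle} (hT : ∀ y ∈ T, n • y = 0) (hT0 : ∀ y ∈ T, y ≠ 0)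
    (hTε : ∀ y ∈ T, ‖y‖ ≤ ε) : (#T : ℝ) ≤ 2 * n * ε := by
  classical
  set K : ℕ := ⌊n * ε⌋₊
  have hsub : T ⊆
      ((Icc (-(K : ℤ)) K).erase 0).image fun j : ℤ => ((j / n : ℝ) : UnitAddCircle) := by
    intro y hy
    obtain ⟨j, rfl, hj⟩ := exists_intCast_div_eq_of_nsmul_eq_zero hn (hT y hy)
    have hjK : j.natAbs ≤ K := by
      refine Nat.le_floor ?_
      rw [Nat.cast_natAbs, Int.cast_abs, hj]
      gcongr
      exact hTε _ hy
    have hj0 : j ≠ 0 := by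
      rintro rfl
      exact hT0 _ hy (by simp)
    exact mem_image_of_mem _ (mem_erase.2 ⟨hj0, mem_Icc.2 (by omega)⟩)
  have hcard : #T ≤ 2 * K := by
    refine (card_le_card hsub).trans (card_image_le.trans ?_)
    rw [card_erase_of_mem (by simp), Int.card_Icc]
    omega
  calc (#T : ℝ) ≤ 2 * K := by exact_mod_cast hcard
    _ ≤ 2 * (n * ε) := by gcongr; exact Nat.floor_le (by positivity)
    _ = 2 * n * ε := by ring

variable {q r : ℕ}

lemma card_le_gcd_of_forall_sub_eq (hq : 0 < q) {w : UnitAddCircle}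
    {T : Finset (UnitAddCircle × UnitAddCircle)} (hTq : ∀ p ∈ T, q • p.1 = 0)
    (hTr : ∀ p ∈ T, r • p.2 = 0) (hTw : ∀ p ∈ T, p.1 - p.2 = w) : #T ≤ q.gcd r := by
  classical
  rcases T.eq_empty_or_nonempty with rfl | ⟨p₀, hp₀⟩
  · simp
  have hinj : Set.InjOn (fun p : UnitAddCircle × UnitAddCircle => p.1 - p₀.1) T := by
    intro p hp p' hp' h
    have hfst : p.1 = p'.1 := sub_left_injective h
    refine Prod.ext hfst ((sub_right_inj (a := p.1)).1 ?_)
    rw [hTw p hp, hfst, hTw p' hp']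
  rw [← card_image_of_injOn hinj]
  refine card_le_of_forall_nsmul_eq_zero (Nat.gcd_pos_of_pos_left _ hq) fun y hy => ?_
  obtain ⟨p, hp, rfl⟩ := mem_image.1 hy
  have hsnd : p.1 - p₀.1 = p.2 - p₀.2 :=
    sub_eq_sub_iff_sub_eq_sub.1 ((hTw p hp).trans (hTw p₀ hp₀).symm)
  rw [← addOrderOf_dvd_iff_nsmul_eq_zero]
  refine Nat.dvd_gcd (addOrderOf_dvd_of_nsmul_eq_zero ?_) (addOrderOf_dvd_of_nsmul_eq_zero ?_)
  · rw [nsmul_sub, hTq p hp, hTq p₀ hp₀, sub_zero]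
  · rw [hsnd, nsmul_sub, hTr p hp, hTr p₀ hp₀, sub_zero]

-- The differences are multiples of `1 / lcm q r`, each attained at most `gcd q r` times.
lemma card_pairs_le (hq : 0 < q) (hr : 0 < r) {ε : ℝ} (hε : 0 ≤ ε)
    {T : Finset (UnitAddCircle × UnitAddCircle)} (hTq : ∀ p ∈ T, q • p.1 = 0)
    (hTr : ∀ p ∈ T, r • p.2 = 0) (hT0 : ∀ p ∈ T, p.1 ≠ p.2) (hTε : ∀ p ∈ T, ‖p.1 - p.2‖ ≤ ε) :
    (#T : ℝ) ≤ 2 * (q * r) * ε := by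
  classical
  set D := T.image fun p => p.1 - p.2
  have hfiber : #T ≤ q.gcd r * #D := by
    refine card_le_mul_card_image T _ fun w _ => card_le_gcd_of_forall_sub_eq (w := w) hq
      (fun p hp => hTq p (mem_filter.1 hp).1) (fun p hp => hTr p (mem_filter.1 hp).1)
      fun p hp => (mem_filter.1 hp).2
  have hD : (#D : ℝ) ≤ 2 * q.lcm r * ε := by
    refine card_le_of_forall_norm_le (Nat.lcm_pos hq hr) hε ?_ ?_ ?_ <;>
      refine forall_mem_image.2 fun p hp => ?_
    · obtain ⟨a, ha⟩ := Nat.dvd_lcm_left q r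
      obtain ⟨b, hb⟩ := Nat.dvd_lcm_right q r
      rw [nsmul_sub, ha, mul_nsmul, hTq p hp, nsmul_zero, ← ha, hb, mul_nsmul, hTr p hp,
        nsmul_zero, sub_zero]
    · exact sub_ne_zero.2 (hT0 p hp)
    · exact hTε p hp
  calc (#T : ℝ) ≤ q.gcd r * #D := by exact_mod_cast hfiber
    _ ≤ q.gcd r * (2 * q.lcm r * ε) := by gcongr
    _ = 2 * ((q.gcd r * q.lcm r : ℕ) : ℝ) * ε := by push_cast; ring
    _ = 2 * (q * r) * ε := by rw [Nat.gcd_mul_lcm]; push_cast; ring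

lemma measureReal_ball_inter_ball_le (y z : UnitAddCircle) {a b : ℝ} (ha : 0 ≤ a) (hb : 0 ≤ b)
    (ha' : 2 * a ≤ 1) (hb' : 2 * b ≤ 1) :
    volume.real (Metric.ball y a ∩ Metric.ball z b) ≤
      if ‖y - z‖ ≤ a + b then 2 * min a b else 0 := by
  split_ifs with h
  · rw [mul_min_of_nonneg _ _ two_pos.le, ← measureReal_ball y ha ha', ← measureReal_ball z hb hb']
    exact le_min (measureReal_mono Set.inter_subset_left) (measureReal_mono Set.inter_subset_right)
  · rw [← dist_eq_norm, not_le] at h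
    rw [(Metric.ball_disjoint_ball h.le).inter_eq, measureReal_empty]

open scoped Classical in
lemma sum_measureReal_ball_inter_ball_le (hq : 0 < q) (hr : 0 < r) {Y Z : Finset UnitAddCircle}
    (hY : ∀ y ∈ Y, q • y = 0) (hZ : ∀ z ∈ Z, r • z = 0) {a b : ℝ} (ha : 0 ≤ a) (hb : 0 ≤ b)
    (ha' : 2 * a ≤ 1) (hb' : 2 * b ≤ 1) :
    ∑ y ∈ Y, ∑ z ∈ Z.erase y, volume.real (Metric.ball y a ∩ Metric.ball z b) ≤
      8 * ((q * a) * (r * b)) := by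
  set T := {p ∈ Y ×ˢ Z | p.1 ≠ p.2 ∧ ‖p.1 - p.2‖ ≤ a + b}
  have hT : (#T : ℝ) ≤ 2 * (q * r) * (a + b) :=
    card_pairs_le hq hr (add_nonneg ha hb)
      (fun p hp => hY _ (mem_product.1 (mem_filter.1 hp).1).1)
      (fun p hp => hZ _ (mem_product.1 (mem_filter.1 hp).1).2)
      (fun p hp => (mem_filter.1 hp).2.1) fun p hp => (mem_filter.1 hp).2.2
  have hmin : (a + b) * min a b ≤ 2 * (a * b) := by
    rw [← min_mul_max a b, ← min_add_max a b]
    nlinarith [min_le_max (a := a) (b := b), le_min ha hb]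
  calc ∑ y ∈ Y, ∑ z ∈ Z.erase y, volume.real (Metric.ball y a ∩ Metric.ball z b)
      ≤ ∑ y ∈ Y, ∑ z ∈ Z.erase y, if ‖y - z‖ ≤ a + b then 2 * min a b else 0 :=
        sum_le_sum fun y _ => sum_le_sum fun z _ =>
          measureReal_ball_inter_ball_le y z ha hb ha' hb'
    _ = #T * (2 * min a b) := by
        rw [← nsmul_eq_mul, ← sum_const, sum_filter, sum_product]
        refine sum_congr rfl fun y _ => ?_
        rw [← filter_ne, sum_filter]
        simp only [ite_and]
    _ ≤ 2 * (q * r) * (a + b) * (2 * min a b) := by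
        have := le_min ha hb
        gcongr
    _ = 4 * (q * r) * ((a + b) * min a b) := by ring
    _ ≤ 4 * (q * r) * (2 * (a * b)) := by gcongr
    _ = 8 * ((q * a) * (r * b)) := by ring

/-- The points of exact order `q` on the circle, that is the reduced fractions with denominator
`q`. The convention for `q = 0` is the empty set, although `addOrderOf` is `0` at every point of
infinite order. -/
def pointsOfOrder (q : ℕ) : Finset UnitAddCircle :=
  if hq : 0 < q then (AddCircle.finite_setOfPred_addOrderOf_eq 1 hq).toFinset else ∅

lemma mem_pointsOfOrder {y : UnitAddCircle} : y ∈ pointsOfOrder q ↔ 0 < q ∧ addOrderOf y = q := by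
  by_cases hq : 0 < q <;> simp [pointsOfOrder, hq]

lemma nsmul_eq_zero_of_mem_pointsOfOrder {y : UnitAddCircle} (hy : y ∈ pointsOfOrder q) :
    q • y = 0 :=
  addOrderOf_dvd_iff_nsmul_eq_zero.1 (mem_pointsOfOrder.1 hy).2.dvd

lemma card_pointsOfOrder (q : ℕ) : #(pointsOfOrder q) = q.totient := by
  rcases q.eq_zero_or_pos with rfl | hq
  · simp [pointsOfOrder]
  rw [← AddCircle.card_addOrderOf_eq_totient (1 : ℝ) (n := q), ← Nat.card_eq_finsetCard]
  exact Nat.card_congr (Equiv.subtypeEquivRight fun y => by simp [mem_pointsOfOrder, hq])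

lemma pairwiseDisjoint_pointsOfOrder (s : Set ℕ) : s.PairwiseDisjoint pointsOfOrder := by
  refine fun q _ r _ hqr => disjoint_left.2 fun y hyq hyr => hqr ?_
  exact (mem_pointsOfOrder.1 hyq).2.symm.trans (mem_pointsOfOrder.1 hyr).2

variable {ψ : ℕ → ℝ}

open scoped Classical in
lemma sum_measureReal_ball_pointsOfOrder (hψ0 : ∀ n, 0 ≤ ψ n) (hψ1 : ∀ n, 2 * ψ n ≤ 1)
    (N : ℕ) :
    ∑ y ∈ (range N).biUnion pointsOfOrder, volume.real (Metric.ball y (ψ (addOrderOf y))) =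
      2 * ∑ n ∈ range N, n.totient * ψ n := by
  rw [sum_biUnion (pairwiseDisjoint_pointsOfOrder _), mul_sum]
  refine sum_congr rfl fun n _ => ?_
  have hball (y : UnitAddCircle) (hy : y ∈ pointsOfOrder n) :
      volume.real (Metric.ball y (ψ (addOrderOf y))) = 2 * ψ n := by
    rw [(mem_pointsOfOrder.1 hy).2, measureReal_ball y (hψ0 n) (hψ1 n)]
  rw [sum_congr rfl hball, sum_const, card_pointsOfOrder, nsmul_eq_mul]
  ring

open scoped Classical in
lemma sum_measureReal_ball_inter_ball_pointsOfOrder_le (hψ0 : ∀ n, 0 ≤ ψ n)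
    (hψ1 : ∀ n, 2 * ψ n ≤ 1) (q r : ℕ) :
    ∑ y ∈ pointsOfOrder q, ∑ z ∈ (pointsOfOrder r).erase y,
      volume.real (Metric.ball y (ψ (addOrderOf y)) ∩ Metric.ball z (ψ (addOrderOf z))) ≤
      8 * ((q * ψ q) * (r * ψ r)) := by
  rcases q.eq_zero_or_pos with rfl | hq
  · simp [pointsOfOrder]
  rcases r.eq_zero_or_pos with rfl | hr
  · simp [pointsOfOrder]
  refine le_of_eq_of_le ?_ (sum_measureReal_ball_inter_ball_le hq hr
    (fun y => nsmul_eq_zero_of_mem_pointsOfOrder) (fun z => nsmul_eq_zero_of_mem_pointsOfOrder)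
    (hψ0 q) (hψ0 r) (hψ1 q) (hψ1 r))
  refine sum_congr rfl fun y hy => sum_congr rfl fun z hz => ?_
  rw [(mem_pointsOfOrder.1 hy).2, (mem_pointsOfOrder.1 (mem_of_mem_erase hz)).2]

open scoped Classical in
lemma sum_measureReal_ball_inter_ball_biUnion_le (hψ0 : ∀ n, 0 ≤ ψ n)
    (hψ1 : ∀ n, 2 * ψ n ≤ 1) (N : ℕ) :
    ∑ y ∈ (range N).biUnion pointsOfOrder, ∑ z ∈ ((range N).biUnion pointsOfOrder).erase y,
      volume.real (Metric.ball y (ψ (addOrderOf y)) ∩ Metric.ball z (ψ (addOrderOf z))) ≤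
      8 * (∑ n ∈ range N, n * ψ n) ^ 2 := by
  rw [sum_biUnion (pairwiseDisjoint_pointsOfOrder _), sq, sum_mul_sum, mul_sum]
  refine sum_le_sum fun q _ => ?_
  calc _ = ∑ r ∈ range N, ∑ y ∈ pointsOfOrder q, ∑ z ∈ (pointsOfOrder r).erase y,
        volume.real (Metric.ball y (ψ (addOrderOf y)) ∩ Metric.ball z (ψ (addOrderOf z))) := by
        rw [sum_comm]
        refine sum_congr rfl fun y _ => ?_
        rw [erase_biUnion, sum_biUnion]
        exact (pairwiseDisjoint_pointsOfOrder _).mono fun r => erase_subset _ _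
    _ ≤ ∑ r ∈ range N, 8 * ((q * ψ q) * (r * ψ r)) :=
        sum_le_sum fun r _ => sum_measureReal_ball_inter_ball_pointsOfOrder_le hψ0 hψ1 q r
    _ = 8 * ∑ r ∈ range N, (q * ψ q) * (r * ψ r) := (mul_sum _ _ _).symm

lemma mem_addWellApproximable_of_infinite {x : UnitAddCircle}
    (hx : {y : UnitAddCircle | 0 < addOrderOf y ∧ x ∈ Metric.ball y (ψ (addOrderOf y))}.Infinite) :
    x ∈ addWellApproximable UnitAddCircle ψ := by
  classical
  rw [UnitAddCircle.mem_addWellApproximable_iff]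
  intro hfin
  refine hx ((hfin.toFinset.biUnion pointsOfOrder).finite_toSet.subset ?_)
  rintro y ⟨hpos, hxy⟩
  obtain ⟨m, hm, hgcd, hy⟩ := (AddCircle.addOrderOf_eq_pos_iff hpos).1 rfl
  refine mem_coe.2 (mem_biUnion.2 ⟨_, hfin.mem_toFinset.2 ⟨m, hm, hgcd, ?_⟩,
    mem_pointsOfOrder.2 ⟨hpos, rfl⟩⟩)
  rw [mul_one] at hy
  rwa [hy, ← dist_eq_norm]

theorem duffin_schaeffer (hψ0 : ∀ n, 0 ≤ ψ n) (hψ1 : ∀ n, 2 * ψ n ≤ 1)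
    (hlim : Tendsto ψ atTop (𝓝 0)) (hdiv : ¬ Summable fun n => n.totient * ψ n) {c : ℝ}
    (hc : ∀ N, ∑ n ∈ range N, n * ψ n ≤ c * ∑ n ∈ range N, n.totient * ψ n) :
    ∀ᵐ x : UnitAddCircle, x ∈ addWellApproximable UnitAddCircle ψ := by
  classical
  have htotient0 (n : ℕ) : 0 ≤ n.totient * ψ n := mul_nonneg (Nat.cast_nonneg _) (hψ0 n)
  set E : UnitAddCircle → Set UnitAddCircle := fun y => Metric.ball y (ψ (addOrderOf y))
  set S : ℕ → Finset UnitAddCircle := fun N => (range N).biUnion pointsOfOrder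
  have hmean (N : ℕ) : ∑ y ∈ S N, volume.real (E y) = 2 * ∑ n ∈ range N, n.totient * ψ n :=
    sum_measureReal_ball_pointsOfOrder hψ0 hψ1 N
  have hpair (N : ℕ) : ∑ y ∈ S N, ∑ z ∈ (S N).erase y, volume.real (E y ∩ E z) ≤
      2 * c ^ 2 * (∑ y ∈ S N, volume.real (E y)) ^ 2 := by
    calc _ ≤ 8 * (∑ n ∈ range N, n * ψ n) ^ 2 :=
          sum_measureReal_ball_inter_ball_biUnion_le hψ0 hψ1 N
      _ ≤ 8 * (c * ∑ n ∈ range N, n.totient * ψ n) ^ 2 := by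
          gcongr
          · exact sum_nonneg fun n _ => mul_nonneg n.cast_nonneg (hψ0 n)
          · exact hc N
      _ = _ := by rw [hmean]; ring
  have hmeandiv : Tendsto (fun N => ∑ y ∈ S N, volume.real (E y)) atTop atTop := by
    simp_rw [hmean]
    exact ((not_summable_iff_tendsto_nat_atTop_of_nonneg htotient0).1 hdiv).const_mul_atTop two_pos
  obtain ⟨G, -, hG, hGpos⟩ :=
    kochen_stone (fun y => Metric.isOpen_ball.measurableSet) hmeandiv hpair
  refine (AddCircle.addWellApproximable_ae_empty_or_univ ψ hlim).resolve_left fun hnull => ?_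
  have hsub : G ⊆ {x | x ∈ addWellApproximable UnitAddCircle ψ} := fun x hx => by
    refine mem_addWellApproximable_of_infinite ((hG x hx).mono ?_)
    rintro y ⟨hy, hxy⟩
    obtain ⟨N, hN⟩ := Set.mem_iUnion.1 hy
    obtain ⟨n, -, hn⟩ := mem_biUnion.1 hN
    obtain ⟨hpos, rfl⟩ := mem_pointsOfOrder.1 hn
    exact ⟨hpos, hxy⟩
  have hG0 : volume.real G = 0 :=
    (measureReal_eq_zero_iff).2 (measure_mono_null hsub (by simpa [ae_iff] using hnull))
  rw [hG0, mul_zero] at hGpos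
  exact hGpos.not_gt one_pos

end Circle

section Torus

section Character

variable {ι A : Type*} [Fintype ι] [AddCommGroup A]

/-- The integral linear form `β ↦ ∑ i, m i • β i` in variables from an abelian group. On the torus,
where `A` is the circle, these are all the continuous characters. -/
def intCharacter (m : ι → ℤ) : (ι → A) →+ A := ∑ i, m i • Pi.evalAddMonoidHom (fun _ => A) i

lemma intCharacter_apply (m : ι → ℤ) (β : ι → A) : intCharacter m β = ∑ i, m i • β i := by
  simp [intCharacter, AddMonoidHom.finsetSum_apply]

lemma intCharacter_single [DecidableEq ι] (m : ι → ℤ) (i : ι) (a : A) :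
    intCharacter m (Pi.single i a) = m i • a := by
  simp [intCharacter_apply, Pi.single_apply, smul_ite]

lemma continuous_intCharacter [TopologicalSpace A] [IsTopologicalAddGroup A] (m : ι → ℤ) :
    Continuous (intCharacter m : (ι → A) →+ A) := by
  simp only [funext (intCharacter_apply m)]
  fun_prop

variable [DivisibleBy A ℤ] {m m' : ι → ℤ} {i j : ι}

lemma surjective_intCharacter (hm : m i ≠ 0) :
    Function.Surjective (intCharacter m : (ι → A) →+ A) := by
  classical
  intro u
  exact ⟨Pi.single i (DivisibleBy.div u (m i)), by
    rw [intCharacter_single, DivisibleBy.div_cancel u hm]⟩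

lemma surjective_intCharacter_prod (h : m i * m' j ≠ m j * m' i) :
    Function.Surjective ((intCharacter m : (ι → A) →+ A).prod (intCharacter m')) := by
  classical
  rintro ⟨u, v⟩
  obtain ⟨u, rfl⟩ : ∃ u', (m i * m' j - m j * m' i) • u' = u :=
    ⟨_, DivisibleBy.div_cancel u (sub_ne_zero.2 h)⟩
  obtain ⟨v, rfl⟩ : ∃ v', (m i * m' j - m j * m' i) • v' = v :=
    ⟨_, DivisibleBy.div_cancel v (sub_ne_zero.2 h)⟩
  -- Cramer's rule for the `2 × 2` system in the coordinates `i` and `j`.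
  refine ⟨Pi.single i (m' j • u - m j • v) + Pi.single j (m i • v - m' i • u), ?_⟩
  simp only [AddMonoidHom.prod_apply, map_add, intCharacter_single, Prod.mk_add_mk,
    Prod.mk.injEq]
  constructor <;> module

end Character

lemma eq_of_isCoprime_of_forall_mul_eq_mul {ι : Type*} {m m' : ι → ℤ} {i j : ι}
    (hm : IsCoprime (m i) (m j)) (hm' : IsCoprime (m' i) (m' j)) (hpos : 0 < m i) (hpos' : 0 < m' i)
    (h : ∀ l, m i * m' l = m l * m' i) : m = m' := by
  have hdvd : m i ∣ m' i := hm.dvd_of_dvd_mul_left ⟨m' j, (h j).symm⟩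
  have hdvd' : m' i ∣ m i := hm'.dvd_of_dvd_mul_right ⟨m j, by rw [h j, mul_comm]⟩
  have hi : m i = m' i := Int.dvd_antisymm hpos.le hpos'.le hdvd hdvd'
  funext l
  have hl := h l
  rw [← hi, mul_comm (m l)] at hl
  exact (mul_left_cancel₀ hpos.ne' hl).symm

variable {ι : Type*} [Fintype ι] {m m' : ι → ℤ} {i j : ι} {a b : ℝ}

lemma measureReal_preimage_intCharacter_ball (hm : m i ≠ 0) (ha : 0 ≤ a) (ha' : 2 * a ≤ 1) :
    volume.real (intCharacter m ⁻¹' Metric.ball (0 : UnitAddCircle) a) = 2 * a := by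
  have hmp : MeasurePreserving (intCharacter m : (ι → UnitAddCircle) →+ UnitAddCircle) :=
    AddMonoidHom.measurePreserving (continuous_intCharacter m) (surjective_intCharacter hm)
      (by rw [measure_univ, measure_univ])
  rw [hmp.measureReal_preimage Metric.isOpen_ball.measurableSet.nullMeasurableSet,
    measureReal_ball 0 ha ha']

lemma measureReal_preimage_intCharacter_ball_inter (h : m i * m' j ≠ m j * m' i)
    (ha : 0 ≤ a) (ha' : 2 * a ≤ 1) (hb : 0 ≤ b) (hb' : 2 * b ≤ 1) :
    volume.real (intCharacter m ⁻¹' Metric.ball (0 : UnitAddCircle) a ∩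
      intCharacter m' ⁻¹' Metric.ball (0 : UnitAddCircle) b) = (2 * a) * (2 * b) := by
  have hmp : MeasurePreserving
      ((intCharacter m : (ι → UnitAddCircle) →+ UnitAddCircle).prod (intCharacter m'))
      volume (volume.prod volume) :=
    AddMonoidHom.measurePreserving
      ((continuous_intCharacter m).prodMk (continuous_intCharacter m'))
      (surjective_intCharacter_prod h) (by rw [measure_univ, measure_univ])
  have hpre := hmp.measureReal_preimage
    (Metric.isOpen_ball.prod Metric.isOpen_ball).measurableSet.nullMeasurableSet
    (s := Metric.ball 0 a ×ˢ Metric.ball 0 b)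
  rw [← measureReal_ball 0 ha ha', ← measureReal_ball 0 hb hb', ← measureReal_prod_prod]
  exact hpre

/-- The integer vectors `(n, a, b₁, …, bₖ)` with `0 ≤ a, b₁, …, bₖ < n` and `a` prime to `n`. No two
of them, for the same or for different `n`, are proportional. -/
def coprimeVectors (k n : ℕ) : Finset (Fin (k + 2) → ℤ) :=
  Fintype.piFinset <| Matrix.vecCons {(n : ℤ)} <|
    Matrix.vecCons (({a ∈ range n | n.Coprime a} : Finset ℕ).map Nat.castEmbedding)
      fun _ => Ico 0 (n : ℤ)

variable {k n n' : ℕ}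

lemma card_coprimeVectors (k n : ℕ) : #(coprimeVectors k n) = n.totient * n ^ k := by
  simp [coprimeVectors, Fintype.card_piFinset, Fin.prod_univ_succ, Nat.totient_eq_card_coprime]

section Mem

variable {m m' : Fin (k + 2) → ℤ}

lemma apply_zero_of_mem_coprimeVectors (hm : m ∈ coprimeVectors k n) : m 0 = n := by
  simpa [coprimeVectors] using Fintype.mem_piFinset.1 hm 0

lemma apply_succ_mem_Ico_of_mem_coprimeVectors (hm : m ∈ coprimeVectors k n) (l : Fin (k + 1)) :
    m l.succ ∈ Ico 0 (n : ℤ) := by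
  have hl := Fintype.mem_piFinset.1 hm l.succ
  rw [Matrix.cons_val_succ] at hl
  induction l using Fin.cases with
  | zero =>
    obtain ⟨a, ha, hal⟩ := mem_map.1 hl
    have han : a < n := mem_range.1 (mem_filter.1 ha).1
    rw [← hal]
    simpa using han
  | succ l => exact hl

lemma isCoprime_of_mem_coprimeVectors (hm : m ∈ coprimeVectors k n) : IsCoprime (m 0) (m 1) := by
  obtain ⟨a, ha, ham⟩ := mem_map.1 (Fintype.mem_piFinset.1 hm 1)
  rw [apply_zero_of_mem_coprimeVectors hm, ← ham]
  exact Nat.isCoprime_iff_coprime.2 (mem_filter.1 ha).2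

lemma apply_zero_pos_of_mem_coprimeVectors (hm : m ∈ coprimeVectors k n) : 0 < m 0 := by
  have h1 := mem_Ico.1 (apply_succ_mem_Ico_of_mem_coprimeVectors hm 0)
  rw [apply_zero_of_mem_coprimeVectors hm]
  omega

lemma norm_eq_of_mem_coprimeVectors (hm : m ∈ coprimeVectors k n) : ‖m‖ = n := by
  refine le_antisymm ((pi_norm_le_iff_of_nonneg n.cast_nonneg).2 fun l => ?_) ?_
  · induction l using Fin.cases with
    | zero => simp [apply_zero_of_mem_coprimeVectors hm]
    | succ l =>
      have hl := mem_Ico.1 (apply_succ_mem_Ico_of_mem_coprimeVectors hm l)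
      rw [Int.norm_eq_abs]
      exact_mod_cast (abs_of_nonneg hl.1).trans_le hl.2.le
  · simpa [apply_zero_of_mem_coprimeVectors hm] using norm_le_pi_norm m 0

lemma pairwiseDisjoint_coprimeVectors (s : Set ℕ) : s.PairwiseDisjoint (coprimeVectors k) := by
  refine fun n _ n' _ hne => disjoint_left.2 fun m hm hm' => hne ?_
  exact_mod_cast (apply_zero_of_mem_coprimeVectors hm).symm.trans
    (apply_zero_of_mem_coprimeVectors hm')

lemma sum_biUnion_coprimeVectors {f : (Fin (k + 2) → ℤ) → ℝ} {g : ℕ → ℝ}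
    (hfg : ∀ n, ∀ m ∈ coprimeVectors k n, f m = g n) (N : ℕ) :
    ∑ m ∈ (range N).biUnion (coprimeVectors k), f m =
      ∑ n ∈ range N, n.totient * (n : ℝ) ^ k * g n := by
  rw [sum_biUnion (pairwiseDisjoint_coprimeVectors _)]
  refine sum_congr rfl fun n _ => ?_
  rw [sum_congr rfl (hfg n), sum_const, card_coprimeVectors, nsmul_eq_mul, Nat.cast_mul,
    Nat.cast_pow]

lemma exists_mul_ne_mul_of_mem_coprimeVectors (hm : m ∈ coprimeVectors k n)
    (hm' : m' ∈ coprimeVectors k n') (hne : m ≠ m') : ∃ l, m 0 * m' l ≠ m l * m' 0 := by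
  by_contra! h
  exact hne (eq_of_isCoprime_of_forall_mul_eq_mul (isCoprime_of_mem_coprimeVectors hm)
    (isCoprime_of_mem_coprimeVectors hm') (apply_zero_pos_of_mem_coprimeVectors hm)
    (apply_zero_pos_of_mem_coprimeVectors hm') h)

end Mem

theorem ae_infinite_norm_intCharacter_lt {ψ : ℕ → ℝ} (hψ0 : ∀ n, 0 ≤ ψ n)
    (hψ1 : ∀ n, 2 * ψ n ≤ 1) (hdiv : ¬ Summable fun n : ℕ => n.totient * (n : ℝ) ^ k * ψ n) :
    ∀ᵐ β : Fin (k + 2) → UnitAddCircle,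
      {m | ∃ n, m ∈ coprimeVectors k n ∧ ‖intCharacter m β‖ < ψ n}.Infinite := by
  classical
  have hterm0 (n : ℕ) : 0 ≤ n.totient * (n : ℝ) ^ k * ψ n := mul_nonneg (by positivity) (hψ0 n)
  set E : (Fin (k + 2) → ℤ) → Set (Fin (k + 2) → UnitAddCircle) := fun m =>
    intCharacter m ⁻¹' Metric.ball 0 (ψ (m 0).toNat)
  set S : ℕ → Finset (Fin (k + 2) → ℤ) := fun N => (range N).biUnion (coprimeVectors k)
  have hE {n : ℕ} {m : Fin (k + 2) → ℤ} (hm : m ∈ coprimeVectors k n) :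
      E m = intCharacter m ⁻¹' Metric.ball 0 (ψ n) := by
    simp only [E, apply_zero_of_mem_coprimeVectors hm, Int.toNat_natCast]
  have hmeasure {n : ℕ} {m : Fin (k + 2) → ℤ} (hm : m ∈ coprimeVectors k n) :
      volume.real (E m) = 2 * ψ n := by
    rw [hE hm, measureReal_preimage_intCharacter_ball (apply_zero_pos_of_mem_coprimeVectors hm).ne'
      (hψ0 n) (hψ1 n)]
  have hmean : Tendsto (fun N => ∑ m ∈ S N, volume.real (E m)) atTop atTop := by
    simp_rw [S, sum_biUnion_coprimeVectors fun _ _ hm => hmeasure hm, mul_left_comm _ (2 : ℝ),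
      ← mul_sum]
    exact ((not_summable_iff_tendsto_nat_atTop_of_nonneg hterm0).1 hdiv).const_mul_atTop two_pos
  have hindep (N : ℕ) : (S N : Set (Fin (k + 2) → ℤ)).Pairwise fun m m' =>
      volume.real (E m ∩ E m') = volume.real (E m) * volume.real (E m') := by
    intro m hm m' hm' hne
    obtain ⟨n, -, hmn⟩ := mem_biUnion.1 hm
    obtain ⟨n', -, hmn'⟩ := mem_biUnion.1 hm'
    obtain ⟨l, hl⟩ := exists_mul_ne_mul_of_mem_coprimeVectors hmn hmn' hne
    rw [hmeasure hmn, hmeasure hmn', hE hmn, hE hmn', measureReal_preimage_intCharacter_ball_inter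
      hl (hψ0 n) (hψ1 n) (hψ0 n') (hψ1 n')]
  have hEmeas (m : Fin (k + 2) → ℤ) : MeasurableSet (E m) :=
    (Metric.isOpen_ball.preimage (continuous_intCharacter m)).measurableSet
  filter_upwards [ae_infinite_of_pairwise_measureReal_inter_eq_mul hEmeas hmean hindep] with β hβ
  refine hβ.mono ?_
  rintro m ⟨hm, hβm⟩
  obtain ⟨N, hN⟩ := Set.mem_iUnion.1 hm
  obtain ⟨n, -, hn⟩ := mem_biUnion.1 hN
  rw [hE hn] at hβm
  exact ⟨n, hn, mem_ball_zero_iff.1 hβm⟩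

end Torus

section LogWellApproximable

/-- A point `β` of the torus is logarithmically well approximable when infinitely many nonzero
integer vectors `m` satisfy `‖m·β‖ ≤ 1 / (|m| ^ d log (1 + |m|))`. Here `|m|` is the supremum norm
of `Fin d → ℤ`; passing to the Euclidean norm only costs a constant. -/
def LogWellApproximable {d : ℕ} (β : Fin d → UnitAddCircle) : Prop :=
  {m : Fin d → ℤ | m ≠ 0 ∧ ‖intCharacter m β‖ ≤ logRate d ‖m‖}.Infinite

lemma logWellApproximable_of_apply_zero_mem_addWellApproximable {ψ : ℕ → ℝ}
    (hψ : ∀ n : ℕ, n * ψ n ≤ logRate 1 n) {β : Fin 1 → UnitAddCircle}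
    (hβ : β 0 ∈ addWellApproximable UnitAddCircle ψ) : LogWellApproximable β := by
  rw [UnitAddCircle.mem_addWellApproximable_iff] at hβ
  have hinj : Function.Injective fun (n : ℕ) (_ : Fin 1) => (n : ℤ) := fun n n' h =>
    Nat.cast_injective (congrFun h 0)
  refine (hβ.image hinj.injOn).mono ?_
  rintro _ ⟨n, ⟨m, hmn, -, hβn⟩, rfl⟩
  have hn : 0 < n := Nat.zero_lt_of_lt hmn
  have htorsion : n • ((m / n : ℝ) : UnitAddCircle) = 0 :=
    (AddCircle.nsmul_eq_zero_iff hn).2 ⟨m, hmn, by rw [mul_one]⟩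
  refine ⟨fun h => hn.ne' (by simpa using congrFun h 0), ?_⟩
  calc ‖intCharacter (fun _ : Fin 1 => (n : ℤ)) β‖
      = ‖n • (β 0 - ((m / n : ℝ) : UnitAddCircle))‖ := by
        rw [nsmul_sub, htorsion, sub_zero, intCharacter_apply, Fin.sum_univ_one, natCast_zsmul]
    _ ≤ n * ‖β 0 - ((m / n : ℝ) : UnitAddCircle)‖ := norm_nsmul_le
    _ ≤ n * ψ n := by gcongr
    _ ≤ logRate 1 n := hψ n
    _ = logRate 1 ‖fun _ : Fin 1 => (n : ℤ)‖ := by simp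

lemma ae_logWellApproximable_one : ∀ᵐ β : Fin 1 → UnitAddCircle, LogWellApproximable β := by
  have hdiv : ¬ Summable fun n : ℕ => n.totient * (logRate 2 n / 4) := by
    simpa only [← mul_div_assoc, summable_div_const_iff (four_ne_zero' ℝ)] using
      not_summable_totient_mul_logRate_two
  have hcircle := duffin_schaeffer (ψ := fun n => logRate 2 n / 4) (c := 2)
    (fun n => by linarith [logRate_natCast_nonneg 2 n])
    (fun n => by linarith [logRate_natCast_le_two 2 n])
    (by simpa using (tendsto_logRate_natCast two_ne_zero).div_const 4) hdiv
    fun N => by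
      simp only [← mul_div_assoc, ← sum_div]
      gcongr
      exact sum_mul_logRate_two_le N
  filter_upwards [(volume_preserving_funUnique (Fin 1) UnitAddCircle).quasiMeasurePreserving.ae
    hcircle] with β hβ
  refine logWellApproximable_of_apply_zero_mem_addWellApproximable (fun n => ?_) hβ
  rw [← natCast_mul_logRate_two]
  have := logRate_natCast_nonneg 2 n
  gcongr
  linarith

lemma ae_logWellApproximable_add_two (k : ℕ) :
    ∀ᵐ β : Fin (k + 2) → UnitAddCircle, LogWellApproximable β := by
  have hdiv : ¬ Summable fun n : ℕ => n.totient * (n : ℝ) ^ k * (logRate (k + 2) n / 4) := by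
    have hterm (n : ℕ) : n.totient * (n : ℝ) ^ k * (logRate (k + 2) n / 4) =
        n.totient * logRate 2 n / 4 := by
      rcases eq_or_ne n 0 with rfl | hn
      · simp
      · rw [← pow_mul_logRate_add 2 (k := k) (Nat.cast_ne_zero.2 hn), add_comm 2 k]
        ring
    simpa only [hterm, summable_div_const_iff (four_ne_zero' ℝ)] using
      not_summable_totient_mul_logRate_two
  filter_upwards [ae_infinite_norm_intCharacter_lt (ψ := fun n => logRate (k + 2) n / 4)
    (fun n => by linarith [logRate_natCast_nonneg (k + 2) n])
    (fun n => by linarith [logRate_natCast_le_two (k + 2) n]) hdiv] with β hβ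
  refine hβ.mono ?_
  rintro m ⟨n, hm, hβm⟩
  refine ⟨fun h => (apply_zero_pos_of_mem_coprimeVectors hm).ne' (congrFun h 0), ?_⟩
  rw [norm_eq_of_mem_coprimeVectors hm]
  linarith [logRate_natCast_nonneg (k + 2) n]

lemma iUnion_pi_Ioc_intCast (ι : Type*) :
    ⋃ k : ι → ℤ, Set.univ.pi (fun i => Set.Ioc (k i : ℝ) (k i + 1)) = Set.univ := by
  refine Set.eq_univ_of_forall fun α => Set.mem_iUnion.2 ⟨fun i => ⌈α i⌉ - 1, fun i _ => ?_⟩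
  have hlt := Int.ceil_lt_add_one (α i)
  have hle := Int.le_ceil (α i)
  push_cast
  constructor <;> linarith

lemma ae_comp_coe_unitAddCircle {ι : Type*} [Fintype ι] {p : (ι → UnitAddCircle) → Prop}
    (h : ∀ᵐ β, p β) : ∀ᵐ α : ι → ℝ, p fun i => (α i : UnitAddCircle) := by
  rw [← Measure.restrict_univ (μ := volume), ← iUnion_pi_Ioc_intCast, ae_restrict_iUnion_eq,
    eventually_iSup]
  intro k
  rw [volume_pi, Measure.restrict_pi_pi]
  exact (measurePreserving_pi _ _ fun i =>
    UnitAddCircle.measurePreserving_mk (k i : ℝ)).quasiMeasurePreserving.ae h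

end LogWellApproximable

section Divergence

lemma dnint_eq_norm (t : ℝ) : dnint t = ‖(t : UnitAddCircle)‖ := UnitAddCircle.norm_eq.symm

lemma intCharacter_coe {d : ℕ} (m : Fin d → ℤ) (α : Fin d → ℝ) :
    intCharacter m (fun i => (α i : UnitAddCircle)) = ((∑ i, m i * α i : ℝ) : UnitAddCircle) := by
  simp only [intCharacter_apply, ← zsmul_eq_mul]
  exact (map_sum (QuotientAddGroup.mk' (AddSubgroup.zmultiples (1 : ℝ))) _ _).symm

variable {d : ℕ} {m : Fin d → ℤ}

lemma znorm_pos (hm : m ≠ 0) : 0 < znorm m := by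
  obtain ⟨i, hi⟩ := Function.ne_iff.1 hm
  have hi' : (m i : ℝ) ≠ 0 := Int.cast_ne_zero.2 hi
  exact Real.sqrt_pos.2 (sum_pos' (fun i _ => sq_nonneg _) ⟨i, mem_univ i, by positivity⟩)

lemma znorm_le (m : Fin d → ℤ) : znorm m ≤ d * ‖m‖ := by
  refine Real.sqrt_le_iff.2 ⟨by positivity, ?_⟩
  have hcoord (i : Fin d) : (m i : ℝ) ^ 2 ≤ ‖m‖ ^ 2 := by
    rw [← sq_abs, ← Int.norm_eq_abs]
    gcongr
    exact norm_le_pi_norm m i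
  calc ∑ i, (m i : ℝ) ^ 2 ≤ ∑ _i : Fin d, ‖m‖ ^ 2 := sum_le_sum fun i _ => hcoord i
    _ = d * ‖m‖ ^ 2 := by simp
    _ ≤ (d : ℝ) ^ 2 * ‖m‖ ^ 2 := by
        gcongr
        exact_mod_cast Nat.le_self_pow two_ne_zero d
    _ = (d * ‖m‖) ^ 2 := (mul_pow _ _ _).symm

lemma log_one_add_natCast_mul_le (n : ℕ) {x : ℝ} (hx : 0 ≤ x) :
    Real.log (1 + n * x) ≤ n * Real.log (1 + x) := by
  rw [← Real.log_pow]
  exact Real.log_le_log (by positivity) (one_add_mul_le_pow (by linarith) n)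

lemma znorm_pow_mul_log_mul_le {ε : ℝ} (hm : m ≠ 0) (hε0 : 0 ≤ ε) (hε : ε ≤ logRate d ‖m‖) :
    znorm m ^ d * Real.log (1 + znorm m) * ε ≤ d ^ d * d := by
  have hz := znorm_pos hm
  have hnorm : 0 < ‖m‖ := norm_pos_iff.2 hm
  have hlog : 0 < Real.log (1 + ‖m‖) := Real.log_pos (by linarith)
  have hzlog : Real.log (1 + znorm m) ≤ d * Real.log (1 + ‖m‖) :=
    (Real.log_le_log (by positivity) (by gcongr; exact znorm_le m)).trans
      (log_one_add_natCast_mul_le d hnorm.le)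
  have hzlog0 : 0 ≤ Real.log (1 + znorm m) := Real.log_nonneg (by linarith)
  calc znorm m ^ d * Real.log (1 + znorm m) * ε
      ≤ (d * ‖m‖) ^ d * (d * Real.log (1 + ‖m‖)) * logRate d ‖m‖ := by
        gcongr
        exact znorm_le m
    _ = d ^ d * d := by
        rw [logRate, mul_pow]
        field_simp

lemma ofReal_rpow_mul_rpow_mul_rpow {x y z ϑ : ℝ} (hx : 0 ≤ x) (hy : 0 ≤ y) :
    ENNReal.ofReal x ^ (-(d * ϑ)) * ENNReal.ofReal y ^ (-ϑ) * ENNReal.ofReal z ^ (-ϑ) =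
      ENNReal.ofReal (x ^ d * y * z) ^ (-ϑ) := by
  rw [ENNReal.ofReal_mul (by positivity), ENNReal.ofReal_mul (by positivity),
    ENNReal.mul_rpow_of_ne_top (by finiteness) (by finiteness),
    ENNReal.mul_rpow_of_ne_top (by finiteness) (by finiteness), ENNReal.ofReal_pow hx,
    ← ENNReal.rpow_natCast, ← ENNReal.rpow_mul, mul_neg]

lemma tsum_eq_top_of_infinite_setOf_le {ι : Type*} {f : ι → ℝ≥0∞} {c : ℝ≥0∞} (hc : c ≠ 0)
    (h : {i | c ≤ f i}.Infinite) : ∑' i, f i = ⊤ := by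
  by_contra hne
  exact h (ENNReal.finite_const_le_of_tsum_ne_top hne hc)

lemma tsum_eq_top_of_logWellApproximable {ϑ : ℝ} (hϑ : 0 ≤ ϑ) {α : Fin d → ℝ}
    (hα : LogWellApproximable fun i => (α i : UnitAddCircle)) :
    ∑' m : {m : Fin d → ℤ // m ≠ 0},
      (ENNReal.ofReal (znorm m.1)) ^ (-((d : ℝ) * ϑ)) *
        (ENNReal.ofReal (Real.log (1 + znorm m.1))) ^ (-ϑ) *
        (ENNReal.ofReal (dnint (∑ i, (m.1 i : ℝ) * α i))) ^ (-ϑ) = ⊤ := by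
  refine tsum_eq_top_of_infinite_setOf_le (c := ENNReal.ofReal (d ^ d * d) ^ (-ϑ)) ?_ fun hfin =>
    hα ((hfin.image Subtype.val).subset ?_)
  · rw [ENNReal.rpow_neg]
    exact ENNReal.inv_ne_zero.2 (ENNReal.rpow_ne_top_of_nonneg hϑ ENNReal.ofReal_ne_top)
  rintro m ⟨hm, hαm⟩
  rw [intCharacter_coe, ← dnint_eq_norm] at hαm
  refine ⟨⟨m, hm⟩, ?_, rfl⟩
  have hz := znorm_pos hm
  rw [Set.mem_ofPred_eq, ofReal_rpow_mul_rpow_mul_rpow hz.le (Real.log_nonneg (by linarith)),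
    ENNReal.rpow_neg, ENNReal.rpow_neg]
  exact ENNReal.inv_le_inv.2 (ENNReal.rpow_le_rpow (ENNReal.ofReal_le_ofReal
    (znorm_pow_mul_log_mul_le hm (abs_nonneg _) hαm)) hϑ)

end Divergence

/-- Lemma 2.6 (ii): for every `ϑ > 0` and almost every `α ∈ ℝ^d` the series
`∑_{m ≠ 0} |m|^{-dϑ} log^{-ϑ}(1+|m|) ‖m·α‖^{-ϑ}` diverges
(terms with `‖m·α‖ = 0` count as `+∞`). -/
theorem stmt_15 (d : ℕ) (hd : 0 < d) (ϑ : ℝ) (hϑ : 0 < ϑ) :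
    ∀ᵐ α ∂(volume : Measure (Fin d → ℝ)),
      ∑' m : {m : Fin d → ℤ // m ≠ 0},
        (ENNReal.ofReal (znorm m.1)) ^ (-((d : ℝ) * ϑ)) *
          (ENNReal.ofReal (Real.log (1 + znorm m.1))) ^ (-ϑ) *
          (ENNReal.ofReal (dnint (∑ i, (m.1 i : ℝ) * α i))) ^ (-ϑ) = ⊤ := by
  have htorus : ∀ᵐ β : Fin d → UnitAddCircle, LogWellApproximable β := by
    rcases d with _ | _ | k
    · exact absurd hd (lt_irrefl 0)
    · exact ae_logWellApproximable_one
    · exact ae_logWellApproximable_add_two k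
  filter_upwards [ae_comp_coe_unitAddCircle htorus] with α hα
  exact tsum_eq_top_of_logWellApproximable hϑ.le hα
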